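/- Let t be a positive integer with 3 ∤ t. Then for every nonnegative integer n, b^4_{3,4t}(16n+15) ≡ 0 (mod 8) and b^4_{3,4t}(16n+11) ≡ 0 (mod 8). -/

import Mathlib

/-- `coloredRegular k l m n` is the number of `k`-colored partitions of `n` into parts
divisible by neither `l` nor `m`, i.e. the coefficient of `q^n` in
`∏_{j ≥ 1, l ∤ j, m ∤ j} (1 - q^j)^{-k}`.  A `k`-colored partition is a multiset of
(part, color) pairs, where parts are positive integers not divisible by `l` or `m`
and colors range over `{0, …, k-1}`. -/
noncomputable def coloredRegular (k l m n : ℕ) : ℕ :=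
  Nat.card {M : Multiset (ℕ × ℕ) //
    (∀ x ∈ M, ¬ l ∣ x.1 ∧ ¬ m ∣ x.1 ∧ x.2 < k) ∧ (M.map Prod.fst).sum = n}

/-!
Let `A` be the generating function of the uncolored partitions, so that the four-colored ones are
counted by `A ^ 4`. The identity `(A ^ 4)' = 4 A ^ 3 A'` shows that the coefficient of `A ^ 4` at an
odd exponent `N` is divisible by `8` as soon as that of `A ^ 3 A'` at `N - 1` is even.

Modulo `2`, write `ψ = ∑ X ^ (k (2 k + 1))` over `k : ℤ` and `ψ₃ = ψ(X ^ 3)`. By Gauss's identity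
`ψ` is the cube of Euler's product, which gives `A ψ₃ = c ^ 4 ψ` for some series `c`; this is the
only place where `t` enters. Counting the representations by `x ^ 2 + 3 y ^ 2` through the fixed
points of an involution gives `ψ ψ₃ = ψ ^ 4 + X ψ₃ ^ 4`. Hence `A = G (ψ ^ 4 + X ψ₃ ^ 4)` with
`G = (c ^ 2 / ψ₃) ^ 2`, and `G' = 0`. Since fourth powers are series in `X ^ 4`, the part of
`A ^ 3 A'` at the exponents `4 r + 2` is `G ψ ψ₃ ^ 3 = c ^ 4 ψ ψ₃ = (c ψ) ^ 4 + X (c ψ₃) ^ 4`, which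
vanishes at every `r` congruent to `2` or `3` modulo `4`. There `4 r + 3` is `11` or `15` modulo
`16`.
-/

open Finset.HasAntidiagonal PowerSeries
open scoped PowerSeries.WithPiTopology

/-- The generating function `∑ i, X ^ a i` of a weight `a` with finite fibres (an infinite fibre
would be counted as empty). -/
noncomputable def weightSeries (R : Type*) [Semiring R] {ι : Type*} (a : ι → ℕ) : R⟦X⟧ :=
  mk fun n => (Nat.card {i // a i = n} : R)

section WeightSeries

variable {R ι κ : Type*}

lemma map_weightSeries {S : Type*} [Semiring R] [Semiring S] (f : R →+* S) (a : ι → ℕ) :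
    map f (weightSeries R a) = weightSeries S a := by
  ext n
  simp only [weightSeries, coeff_map, coeff_mk, map_natCast]

lemma weightSeries_comp_equiv [Semiring R] (e : ι ≃ κ) (a : κ → ℕ) :
    weightSeries R (fun i => a (e i)) = weightSeries R a := by
  ext n
  simp only [weightSeries, coeff_mk]
  rw [Nat.card_congr (e.subtypeEquiv (q := fun j => a j = n) fun _ => Iff.rfl)]

lemma weightSeries_sumElim [Semiring R] {a : ι → ℕ} {b : κ → ℕ}
    (ha : ∀ n, Finite {i // a i = n}) (hb : ∀ n, Finite {j // b j = n}) :
    weightSeries R (Sum.elim a b) = weightSeries R a + weightSeries R b := by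
  ext n
  have := ha n
  have := hb n
  simp only [weightSeries, coeff_mk, map_add]
  rw [Nat.card_congr Equiv.subtypeSum]
  simp only [Sum.elim_inl, Sum.elim_inr, Nat.card_sum, Nat.cast_add]

/-- Pairs of total weight `n`, sorted by the weights of their components. -/
def fiberAddEquiv (a : ι → ℕ) (b : κ → ℕ) (n : ℕ) :
    {x : ι × κ // a x.1 + b x.2 = n} ≃
      Σ p : antidiagonal n, {i // a i = p.1.1} × {j // b j = p.1.2} where
  toFun x := ⟨⟨(a x.1.1, b x.1.2), mem_antidiagonal.mpr x.2⟩, ⟨x.1.1, rfl⟩, ⟨x.1.2, rfl⟩⟩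
  invFun y := ⟨(y.2.1, y.2.2), by rw [y.2.1.2, y.2.2.2, mem_antidiagonal.mp y.1.2]⟩
  left_inv _ := rfl
  right_inv := by
    rintro ⟨⟨⟨_, _⟩, _⟩, ⟨i, hi⟩, ⟨j, hj⟩⟩
    dsimp only at hi hj
    subst hi hj
    rfl

lemma finite_fiber_add {a : ι → ℕ} {b : κ → ℕ} (ha : ∀ n, Finite {i // a i = n})
    (hb : ∀ n, Finite {j // b j = n}) (n : ℕ) : Finite {x : ι × κ // a x.1 + b x.2 = n} := by
  have (p : antidiagonal n) : Finite ({i // a i = p.1.1} × {j // b j = p.1.2}) :=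
    @Finite.instProd _ _ (ha _) (hb _)
  exact Finite.of_equiv _ (fiberAddEquiv a b n).symm

lemma finite_fiber_comp {f : ℕ → ℕ} (hf : f.Injective) {a : ι → ℕ}
    (ha : ∀ n, Finite {i // a i = n}) (n : ℕ) : Finite {i // f (a i) = n} := by
  have hfib : {m | f m = n}.Finite := Set.Finite.preimage hf.injOn (Set.finite_singleton n)
  exact (hfib.preimage' (f := a) fun m _ => ha m)

lemma weightSeries_prod [Semiring R] {a : ι → ℕ} {b : κ → ℕ}
    (ha : ∀ n, Finite {i // a i = n}) (hb : ∀ n, Finite {j // b j = n}) :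
    weightSeries R (fun x : ι × κ => a x.1 + b x.2) = weightSeries R a * weightSeries R b := by
  ext n
  simp only [weightSeries, coeff_mk, coeff_mul, ← Nat.cast_mul, ← Nat.cast_sum]
  rw [Nat.card_congr (fiberAddEquiv a b n), Nat.card_sigma]
  simp only [Nat.card_prod]
  rw [Finset.sum_coe_sort (antidiagonal n) fun p =>
    Nat.card {i // a i = p.1} * Nat.card {j // b j = p.2}]

lemma weightSeries_const_mul [CommRing R] {d : ℕ} (hd : d ≠ 0) (a : ι → ℕ) :
    weightSeries R (fun i => d * a i) = expand d hd (weightSeries R a) := by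
  ext n
  simp only [weightSeries, coeff_mk, coeff_expand]
  split_ifs with h
  · obtain ⟨m, rfl⟩ := h
    simp only [mul_right_inj' hd, Nat.mul_div_cancel_left m (Nat.pos_of_ne_zero hd)]
  · have : IsEmpty {i // d * a i = n} := ⟨fun i => h ⟨_, i.2.symm⟩⟩
    simp only [Nat.card_of_isEmpty, Nat.cast_zero]

lemma weightSeries_add_one [Semiring R] (a : ι → ℕ) :
    weightSeries R (fun i => a i + 1) = X * weightSeries R a := by
  ext n
  cases n with
  | zero => simp [weightSeries]
  | succ n => simp [weightSeries, coeff_succ_X_mul]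

lemma hasSum_weightSeries [Semiring R] [TopologicalSpace R] {a : ι → ℕ}
    (ha : ∀ n, Finite {i // a i = n}) :
    HasSum (fun i => (X : R⟦X⟧) ^ a i) (weightSeries R a) := by
  refine (WithPiTopology.hasSum_iff_hasSum_coeff R).mpr fun n => ?_
  have hfin : {i | a i = n}.Finite := ha n
  have hsum : ∑ i ∈ hfin.toFinset, coeff n ((X : R⟦X⟧) ^ a i) = coeff n (weightSeries R a) := by
    rw [Finset.sum_congr rfl (g := fun _ => (1 : R)) fun i hi => ?_]
    · rw [Finset.sum_const, nsmul_one, ← Set.ncard_eq_toFinset_card _ hfin]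
      simp only [weightSeries, coeff_mk]
      rfl
    · rw [coeff_X_pow, if_pos (hfin.mem_toFinset.mp hi).symm]
  rw [← hsum]
  refine hasSum_sum_of_ne_finset_zero fun i hi => ?_
  rw [coeff_X_pow, if_neg fun h => hi (hfin.mem_toFinset.mpr h.symm)]

lemma weightSeries_fixedPoints {σ : ι → ι} (hσ : Function.Involutive σ) {a : ι → ℕ}
    (ha : ∀ n, Finite {i // a i = n}) (haσ : ∀ i, a (σ i) = a i) :
    weightSeries (ZMod 2) (fun i : Function.fixedPoints σ => a i) = weightSeries (ZMod 2) a := by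
  classical
  ext n
  have := ha n
  have := Fintype.ofFinite {i // a i = n}
  let τ : Function.End {i // a i = n} := fun i => ⟨σ i, (haσ i).trans i.2⟩
  have hτ : τ ^ 2 ^ 1 = 1 := funext fun i => Subtype.ext (hσ i)
  let e : {i : Function.fixedPoints σ // a i = n} ≃ Function.fixedPoints τ :=
    { toFun i := ⟨⟨i, i.2⟩, Subtype.ext i.1.2⟩
      invFun i := ⟨⟨i, congrArg Subtype.val i.2⟩, i.1.2⟩ }
  simp only [weightSeries, coeff_mk]
  rw [Nat.card_congr e, Nat.card_eq_fintype_card, Nat.card_eq_fintype_card,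
    (ZMod.natCast_eq_natCast_iff _ _ _).mpr (Equiv.Perm.card_fixedPoints_modEq hτ)]

end WeightSeries

section Divisibility

lemma succ_mul_dvd_coeff_pow_succ (A : ℕ⟦X⟧) {d k n : ℕ} (hn : ((k + 1) * d).Coprime (n + 1))
    (h : coeff n (map (Nat.castRingHom (ZMod d)) (A ^ k * d⁄dX ℕ A)) = 0) :
    (k + 1) * d ∣ coeff (n + 1) (A ^ (k + 1)) := by
  have hd : d ∣ coeff n (A ^ k * d⁄dX ℕ A) := by
    rwa [coeff_map, eq_natCast, ZMod.natCast_eq_zero_iff] at h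
  have hderiv : coeff (n + 1) (A ^ (k + 1)) * (n + 1) = (k + 1) * coeff n (A ^ k * d⁄dX ℕ A) := by
    have := congrArg (coeff n) (Derivation.leibniz_pow (d⁄dX ℕ) (k + 1) (a := A))
    rwa [coeff_derivative, Nat.add_sub_cancel, map_nsmul, smul_eq_mul, smul_eq_mul, Nat.cast_id]
      at this
  refine hn.dvd_of_dvd_mul_right ?_
  rw [hderiv]
  exact mul_dvd_mul_left _ hd

end Divisibility

section PrimeCharacteristic

lemma map_derivative {R S : Type*} [CommSemiring R] [CommSemiring S] (φ : R →+* S) (f : R⟦X⟧) :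
    map φ (d⁄dX R f) = d⁄dX S (map φ f) := by
  ext n
  simp only [coeff_map, coeff_derivative, map_mul, map_add, map_natCast, map_one]

instance {R : Type*} [CommSemiring R] (p : ℕ) [CharP R p] : CharP R⟦X⟧ p :=
  charP_of_injective_ringHom C_injective p

lemma derivative_pow_char {R : Type*} [CommSemiring R] (p : ℕ) [CharP R p] (f : R⟦X⟧) :
    d⁄dX R (f ^ p) = 0 := by
  rw [Derivation.leibniz_pow, ← Nat.cast_smul_eq_nsmul R⟦X⟧, CharP.cast_eq_zero, zero_smul]

lemma expand_eq_pow (p : ℕ) [hp : Fact p.Prime] (k : ℕ) (f : (ZMod p)⟦X⟧) :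
    expand (p ^ k) (pow_ne_zero k hp.out.ne_zero) f = f ^ p ^ k := by
  have := MvPowerSeries.map_iterateFrobenius_expand (R := ZMod p) p hp.out.ne_zero f k
  rwa [show iterateFrobenius (ZMod p) p k = RingHom.id _ from RingHom.ext_zmod _ _,
    MvPowerSeries.map_id] at this

lemma coeff_X_pow_mul_expand {R : Type*} [CommRing R] {d i j : ℕ} (hd : d ≠ 0) (hi : i < d)
    (hj : j < d) (r : ℕ) (f : R⟦X⟧) :
    coeff (d * r + i) (X ^ j * expand d hd f) = if i = j then coeff r f else 0 := by
  split_ifs with hij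
  · rw [hij, coeff_X_pow_mul, coeff_expand_mul]
  · rw [coeff_X_pow_mul']
    split_ifs with hle
    · refine coeff_expand_of_not_dvd d hd f fun ⟨m, hm⟩ => hij ?_
      have : (d * r + i) % d = (d * m + j) % d := by rw [← hm, Nat.sub_add_cancel hle]
      rwa [Nat.mul_add_mod, Nat.mul_add_mod, Nat.mod_eq_of_lt hi, Nat.mod_eq_of_lt hj] at this
    · rfl

lemma coeff_X_pow_mul_pow_four {i j : ℕ} (hi : i < 4) (hj : j < 4) (r : ℕ) (f : (ZMod 2)⟦X⟧) :
    coeff (4 * r + i) (X ^ j * f ^ 4) = if i = j then coeff r f else 0 := by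
  rw [show f ^ 4 = f ^ 2 ^ 2 from rfl, ← expand_eq_pow 2 2 f]
  exact coeff_X_pow_mul_expand _ hi hj r f

lemma coeff_pow_four_add_X_mul_pow_four_eq_zero {i : ℕ} (hi : 2 ≤ i) (hi' : i < 4) (r : ℕ)
    (f g : (ZMod 2)⟦X⟧) : coeff (4 * r + i) (f ^ 4 + X * g ^ 4) = 0 := by
  have hf := coeff_X_pow_mul_pow_four hi' (by norm_num : 0 < 4) r f
  have hg := coeff_X_pow_mul_pow_four hi' (by norm_num : 1 < 4) r g
  rw [if_neg (by lia)] at hf hg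
  rw [map_add, ← pow_one X, hg, ← one_mul (f ^ 4), ← pow_zero X, hf, add_zero]

lemma coeff_cube_mul_derivative {A G f g : (ZMod 2)⟦X⟧} (hG : d⁄dX (ZMod 2) G = 0)
    (hA : A = G * (f ^ 4 + X * g ^ 4)) (r : ℕ) :
    coeff (4 * r + 2) (A ^ 3 * d⁄dX (ZMod 2) A) = coeff r (G * f * g ^ 3) := by
  have hderiv_pow (h : (ZMod 2)⟦X⟧) : d⁄dX (ZMod 2) (h ^ 4) = 0 := by
    rw [show h ^ 4 = (h ^ 2) ^ 2 by ring, derivative_pow_char]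
  have hderiv : d⁄dX (ZMod 2) A = G * g ^ 4 := by
    simp only [hA, Derivation.leibniz, hG, hderiv_pow, map_add, derivative_X, smul_eq_mul,
      mul_zero, add_zero, mul_one, zero_add]
  have hsplit : A ^ 3 * (G * g ^ 4) =
      X ^ 0 * (G * f ^ 3 * g) ^ 4 + X ^ 1 * (G * f ^ 2 * g ^ 2) ^ 4 +
      X ^ 2 * (G * f * g ^ 3) ^ 4 + X ^ 3 * (G * g ^ 4) ^ 4 := by
    linear_combination (exp := 1) (G * g ^ 4) * (A ^ 2 + A * (G * (f ^ 4 + X * g ^ 4)) +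
      (G * (f ^ 4 + X * g ^ 4)) ^ 2) * hA + (X * (G * f ^ 2 * g ^ 2) ^ 4 +
      X ^ 2 * (G * f * g ^ 3) ^ 4) * CharTwo.two_eq_zero (R := (ZMod 2)⟦X⟧)
  simp only [hderiv, hsplit, map_add, coeff_X_pow_mul_pow_four, Nat.reduceLT, Nat.reduceEqDiff,
    if_true, if_false, zero_add, add_zero]

end PrimeCharacteristic

section PartProduct

/-- The product of `1 - X ^ j` over `j ∈ S`. For `0 ∉ S` it is the inverse of the generating
function of the partitions into parts from `S`. -/
noncomputable def partProduct (R : Type*) [CommRing R] [TopologicalSpace R] (S : Set ℕ) : R⟦X⟧ :=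
  ∏' j : S, (1 - X ^ (j : ℕ))

variable {R : Type*} [CommRing R] [TopologicalSpace R]

lemma multipliable_partProduct (S : Set ℕ) :
    Multipliable fun j : S => 1 - (X : R⟦X⟧) ^ (j : ℕ) := by
  nontriviality R
  refine multipliable_subtype_iff_mulIndicator (f := fun j => 1 - (X : R⟦X⟧) ^ j).mpr ?_
  have hfactor : S.mulIndicator (fun j => 1 - (X : R⟦X⟧) ^ j) =
      fun j => 1 + S.indicator (fun j => -X ^ j) j := by
    ext1 j
    by_cases hj : j ∈ S <;> simp [hj, sub_eq_add_neg]
  rw [hfactor]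
  refine WithPiTopology.multipliable_one_add_of_tendsto_order_atTop_nhds_top _ ?_
  refine ENat.tendsto_nhds_top_iff_natCast_lt.mpr fun N => ?_
  filter_upwards [Filter.eventually_gt_atTop N] with j hj
  by_cases hS : j ∈ S
  · rw [Set.indicator_of_mem hS, order_neg, order_X_pow]
    exact_mod_cast hj
  · rw [Set.indicator_of_notMem hS, order_zero]
    exact ENat.natCast_lt_top N

lemma continuous_expand {d : ℕ} (hd : d ≠ 0) : Continuous (expand (R := R) d hd) := by
  refine continuous_iff_continuousAt.mpr fun f =>
    (WithPiTopology.tendsto_iff_coeff_tendsto R _ _ _).mpr fun n => ?_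
  simp only [coeff_expand]
  split_ifs
  · exact (WithPiTopology.continuous_coeff R _).tendsto f
  · exact tendsto_const_nhds

variable [T2Space R]

lemma partProduct_union [IsTopologicalRing R] {S T : Set ℕ} (h : Disjoint S T) :
    partProduct R (S ∪ T) = partProduct R S * partProduct R T :=
  Multipliable.tprod_union_disjoint (f := fun j => 1 - (X : R⟦X⟧) ^ j) h
    (multipliable_partProduct S) (multipliable_partProduct T)

lemma partProduct_image_mul {d : ℕ} (hd : d ≠ 0) (S : Set ℕ) :
    partProduct R ((d * ·) '' S) = expand d hd (partProduct R S) := by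
  rw [partProduct, partProduct, (multipliable_partProduct S).map_tprod _ (continuous_expand hd),
    tprod_image (fun j => 1 - (X : R⟦X⟧) ^ j) (mul_right_injective₀ hd).injOn]
  simp only [map_sub, map_one, map_pow, expand_X, pow_mul]

lemma mk_card_restricted_mul_partProduct [IsTopologicalRing R] {p : ℕ → Prop} [DecidablePred p]
    (hp : ¬ p 0) :
    (mk fun n => ((Nat.Partition.restricted n p).card : R)) * partProduct R {j | p j} = 1 := by
  have hpart : HasProd (fun n => {j | p j}.mulIndicator (fun j => 1 - (X : R⟦X⟧) ^ j) (n + 1))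
      (partProduct R {j | p j}) := by
    have h := hasProd_subtype_iff_mulIndicator (f := fun j => 1 - (X : R⟦X⟧) ^ j).mp
      (multipliable_partProduct {j | p j}).hasProd
    refine (Nat.succ_injective.hasProd_iff fun j hj => ?_).mpr h
    obtain rfl : j = 0 := by simpa using hj
    exact Set.mulIndicator_of_notMem hp _
  refine ((Nat.Partition.hasProd_powerSeriesMk_card_restricted R p).mul hpart).unique ?_
  convert! hasProd_one with n
  by_cases hn : p (n + 1)
  · simp only [hn, if_true, Set.mulIndicator_of_mem (show n + 1 ∈ {j | p j} from hn), pow_mul]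
    exact WithPiTopology.tsum_pow_mul_one_sub_of_constantCoeff_eq_zero (by simp)
  · simp only [hn, if_false, Set.mulIndicator_of_notMem (show n + 1 ∉ {j | p j} from hn), mul_one]

end PartProduct

section ColoredPartition

/-- The partitions into parts satisfying `p`, as multisets; positivity of the parts is imposed by
`¬ p 0` where it matters. -/
abbrev PartsIn (p : ℕ → Prop) : Type := {N : Multiset ℕ // ∀ j ∈ N, p j}

/-- The `k`-colored partitions into parts satisfying `p`, as multisets of pairs (part, color). -/
abbrev ColoredPartsIn (p : ℕ → Prop) (k : ℕ) : Type :=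
  {M : Multiset (ℕ × ℕ) // ∀ x ∈ M, p x.1 ∧ x.2 < k}

/-- Splits the parts of the last color off a `(k + 1)`-colored partition. -/
def lastColorEquiv (p : ℕ → Prop) (k : ℕ) :
    ColoredPartsIn p (k + 1) ≃ ColoredPartsIn p k × PartsIn p where
  toFun M :=
    (⟨M.1.filter (·.2 < k), fun x hx =>
        ⟨(M.2 x (Multiset.mem_of_mem_filter hx)).1, (Multiset.mem_filter.mp hx).2⟩⟩,
      ⟨(M.1.filter (·.2 = k)).map Prod.fst, fun j hj => by
        obtain ⟨x, hx, rfl⟩ := Multiset.mem_map.mp hj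
        exact (M.2 x (Multiset.mem_of_mem_filter hx)).1⟩)
  invFun y :=
    ⟨y.1.1 + y.2.1.map (·, k), fun x hx => by
      rcases Multiset.mem_add.mp hx with hx | hx
      · exact (y.1.2 x hx).imp_right (·.trans k.lt_succ_self)
      · obtain ⟨j, hj, rfl⟩ := Multiset.mem_map.mp hx
        exact ⟨y.2.2 j hj, k.lt_succ_self⟩⟩
  left_inv M := Subtype.ext <| by
    have hlast : (M.1.filter (·.2 = k)).map (fun x => (x.1, k)) = M.1.filter (¬ ·.2 < k) := by
      rw [Multiset.map_congr rfl fun x hx =>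
        show (x.1, k) = x from Prod.ext rfl (Multiset.of_mem_filter hx).symm, Multiset.map_id']
      exact Multiset.filter_congr fun x hx => by have := (M.2 x hx).2; lia
    simp only [Multiset.map_map, Function.comp_def, hlast, Multiset.filter_add_not]
  right_inv y := by
    have hlt : y.1.1.filter (·.2 < k) = y.1.1 :=
      Multiset.filter_eq_self.mpr fun x hx => (y.1.2 x hx).2
    have heq : y.1.1.filter (·.2 = k) = 0 :=
      Multiset.filter_eq_nil.mpr fun x hx => (y.1.2 x hx).2.ne
    refine Prod.ext (Subtype.ext ?_) (Subtype.ext ?_)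
    · simp [Multiset.filter_add, Multiset.filter_map, hlt]
    · simp [Multiset.filter_add, Multiset.filter_map, heq]

/-- Identifies the partitions of `n` among `PartsIn p` with those in Mathlib's sense. -/
def fiberSumEquivRestricted {p : ℕ → Prop} [DecidablePred p] (hp : ¬ p 0) (n : ℕ) :
    {N : PartsIn p // N.1.sum = n} ≃ Nat.Partition.restricted n p where
  toFun N := ⟨⟨N.1.1, fun hj => Nat.pos_of_ne_zero fun h0 => hp (h0 ▸ N.1.2 _ hj), N.2⟩,
    Finset.mem_filter.mpr ⟨Finset.mem_univ _, N.1.2⟩⟩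
  invFun π := ⟨⟨π.1.parts, (Finset.mem_filter.mp π.2).2⟩, π.1.parts_sum⟩

lemma sum_map_fst_lastColorEquiv_symm {p : ℕ → Prop} {k : ℕ} (y : ColoredPartsIn p k × PartsIn p) :
    (((lastColorEquiv p k).symm y).1.map Prod.fst).sum = (y.1.1.map Prod.fst).sum + y.2.1.sum := by
  simp [lastColorEquiv]

instance (p : ℕ → Prop) : Unique (ColoredPartsIn p 0) where
  default := ⟨0, fun _ hx => absurd hx (Multiset.notMem_zero _)⟩
  uniq M := Subtype.ext <|
    Multiset.eq_zero_of_forall_notMem fun x hx => Nat.not_lt_zero _ (M.2 x hx).2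

variable {p : ℕ → Prop} (hp : ¬ p 0)
include hp

lemma finite_fiber_sum (n : ℕ) : Finite {N : PartsIn p // N.1.sum = n} := by
  classical
  exact Finite.of_equiv _ (fiberSumEquivRestricted hp n).symm

lemma weightSeries_partsIn [DecidablePred p] (R : Type*) [Semiring R] :
    weightSeries R (fun N : PartsIn p => N.1.sum) =
      mk fun n => ((Nat.Partition.restricted n p).card : R) := by
  ext n
  rw [weightSeries, coeff_mk, coeff_mk, Nat.card_congr (fiberSumEquivRestricted hp n),
    Nat.card_eq_fintype_card, Fintype.card_coe]

lemma finite_fiber_sum_map_fst (k n : ℕ) :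
    Finite {M : ColoredPartsIn p k // (M.1.map Prod.fst).sum = n} := by
  induction k generalizing n with
  | zero => infer_instance
  | succ k ih =>
    have := finite_fiber_add ih (finite_fiber_sum hp) n
    exact Finite.of_equiv _ ((lastColorEquiv p k).symm.subtypeEquiv fun y => by
      rw [sum_map_fst_lastColorEquiv_symm])

lemma weightSeries_coloredPartsIn (R : Type*) [CommSemiring R] (k : ℕ) :
    weightSeries R (fun M : ColoredPartsIn p k => (M.1.map Prod.fst).sum) =
      weightSeries R (fun N : PartsIn p => N.1.sum) ^ k := by
  induction k with
  | zero =>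
    have hempty (M : ColoredPartsIn p 0) : (M.1.map Prod.fst).sum = 0 := by
      rw [Subsingleton.elim M default]
      rfl
    ext n
    rcases eq_or_ne n 0 with rfl | hn
    · simp [hempty, weightSeries]
    · simp [hempty, weightSeries, coeff_one, hn, hn.symm]
  | succ k ih =>
    rw [pow_succ, ← ih, ← weightSeries_prod (finite_fiber_sum_map_fst hp k) (finite_fiber_sum hp),
      ← weightSeries_comp_equiv (lastColorEquiv p k).symm]
    simp only [sum_map_fst_lastColorEquiv_symm]

end ColoredPartition

section RegularSeries

/-- The generating function of the partitions into parts divisible by neither `l` nor `m`. -/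
noncomputable def regularSeries (R : Type*) [Semiring R] (l m : ℕ) : R⟦X⟧ :=
  weightSeries R fun N : PartsIn (fun j => ¬ l ∣ j ∧ ¬ m ∣ j) => N.1.sum

lemma map_regularSeries {R S : Type*} [Semiring R] [Semiring S] (f : R →+* S) (l m : ℕ) :
    map f (regularSeries R l m) = regularSeries S l m :=
  map_weightSeries f _

lemma not_not_dvd_zero_and (l m : ℕ) : ¬ (¬ l ∣ 0 ∧ ¬ m ∣ 0) := fun h => h.1 (dvd_zero l)

lemma coeff_regularSeries_pow (k l m n : ℕ) :
    coeff n (regularSeries ℕ l m ^ k) = coloredRegular k l m n := by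
  rw [regularSeries, ← weightSeries_coloredPartsIn (not_not_dvd_zero_and l m)]
  simp only [weightSeries, coeff_mk, coloredRegular, Nat.cast_id, ← and_assoc]
  exact Nat.card_congr (Equiv.subtypeSubtypeEquivSubtypeInter _
    fun M : Multiset (ℕ × ℕ) => (M.map Prod.fst).sum = n)

lemma regularSeries_mul_partProduct {R : Type*} [CommRing R] [TopologicalSpace R]
    [IsTopologicalRing R] [T2Space R] (l m : ℕ) :
    regularSeries R l m * partProduct R {j | ¬ l ∣ j ∧ ¬ m ∣ j} = 1 := by
  rw [regularSeries, weightSeries_partsIn (not_not_dvd_zero_and l m),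
    mk_card_restricted_mul_partProduct (not_not_dvd_zero_and l m)]

end RegularSeries

section Gauss

-- Shanks's finite form of Gauss's identity `gaussSeries_mul_partProduct`: as `n` tends to
-- infinity, only the summand `s = 0` on the left survives.
lemma sum_prod_one_sub_pow_eq {R : Type*} [CommRing R] (q : R) (n : ℕ) :
    ∑ s ∈ Finset.range n, (∏ k ∈ Finset.Ico s n, (1 - q ^ (2 * k + 2))) *
        (∏ k ∈ Finset.range s, (1 - q ^ (2 * k + 1))) * q ^ (s * (2 * n + 1)) =
      (∏ k ∈ Finset.range n, (1 - q ^ (2 * k + 1))) *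
        ∑ k ∈ Finset.range n, (q ^ (k * (2 * k + 1)) + q ^ ((k + 1) * (2 * k + 1))) := by
  induction n with
  | zero => simp
  | succ n ih =>
    set O : ℕ → R := fun s => ∏ k ∈ Finset.range s, (1 - q ^ (2 * k + 1))
    set E : ℕ → ℕ → R := fun s n => ∏ k ∈ Finset.Ico s n, (1 - q ^ (2 * k + 2))
    change ∑ s ∈ Finset.range n, E s n * O s * q ^ (s * (2 * n + 1)) = O n * _ at ih
    change ∑ s ∈ Finset.range (n + 1), E s (n + 1) * O s * q ^ (s * (2 * (n + 1) + 1)) =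
      O (n + 1) * _
    have hO (s : ℕ) : O (s + 1) = O s * (1 - q ^ (2 * s + 1)) := Finset.prod_range_succ _ s
    have hE_top {s : ℕ} (hs : s ≤ n) : E s (n + 1) = E s n * (1 - q ^ (2 * n + 2)) :=
      Finset.prod_Ico_succ_top hs _
    have hE_bot {s : ℕ} (hs : s < n) : E s n = (1 - q ^ (2 * s + 2)) * E (s + 1) n :=
      Finset.prod_eq_prod_Ico_succ_bot hs _
    have hE_self : E n n = 1 := by simp [E]
    let Z : ℕ → R := fun s => E s n * O s * (1 - q ^ (2 * s)) * q ^ (s * (2 * n + 1))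
    have htelescope {s : ℕ} (hs : s < n) : E s (n + 1) * O s * q ^ (s * (2 * (n + 1) + 1)) =
        (1 - q ^ (2 * n + 1)) * (E s n * O s * q ^ (s * (2 * n + 1))) + (Z (s + 1) - Z s) := by
      simp only [Z, hO, hE_top hs.le, hE_bot hs]
      ring
    have hsum : ∑ s ∈ Finset.range n, (Z (s + 1) - Z s) = Z n := by
      rw [Finset.sum_range_sub]
      simp [Z]
    rw [Finset.sum_range_succ, Finset.sum_congr rfl fun s hs => htelescope (Finset.mem_range.mp hs),
      Finset.sum_add_distrib, ← Finset.mul_sum, ih, hsum, Finset.sum_range_succ, hO,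
      hE_top le_rfl, hE_self]
    simp only [Z, hE_self]
    ring

/-- The exponents `k (2 k + 1)` of Gauss's theta series, which run through the triangular numbers
once each. -/
def triangularWeight (k : ℤ) : ℕ := (k * (2 * k + 1)).natAbs

/-- Gauss's theta series `ψ = ∑ k : ℤ, X ^ (k (2 k + 1))`, the generating function of the
triangular numbers. -/
noncomputable def gaussSeries (R : Type*) [Semiring R] : R⟦X⟧ := weightSeries R triangularWeight

lemma cast_triangularWeight (k : ℤ) : (triangularWeight k : ℤ) = k * (2 * k + 1) := by
  rw [triangularWeight, Int.natAbs_of_nonneg]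
  rcases le_or_gt 0 k with hk | hk <;> nlinarith

lemma finite_fiber_triangularWeight (n : ℕ) : Finite {k : ℤ // triangularWeight k = n} := by
  refine Set.Finite.subset (Set.finite_Icc (-n : ℤ) n) fun k hk => ?_
  have : k * (2 * k + 1) = n := (cast_triangularWeight k).symm.trans (congrArg _ hk)
  constructor <;> nlinarith [sq_nonneg k]

lemma tendsto_zero_of_X_pow_dvd {R : Type*} [Semiring R] [TopologicalSpace R] {f : ℕ → R⟦X⟧}
    (hf : ∀ n, X ^ n ∣ f n) : Filter.Tendsto f Filter.atTop (nhds 0) := by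
  refine (WithPiTopology.tendsto_iff_coeff_tendsto R f _ 0).mpr fun d => ?_
  refine tendsto_const_nhds.congr' ?_
  filter_upwards [Filter.eventually_gt_atTop d] with n hn
  rw [map_zero, X_pow_dvd_iff.mp (hf n) d hn]

variable {R : Type*} [CommRing R] [TopologicalSpace R]

lemma tendsto_sum_gaussSeries [IsTopologicalRing R] :
    Filter.Tendsto (fun n => ∑ k ∈ Finset.range n,
      ((X : R⟦X⟧) ^ (k * (2 * k + 1)) + X ^ ((k + 1) * (2 * k + 1)))) Filter.atTop
      (nhds (gaussSeries R)) := by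
  have hnat (k : ℕ) : triangularWeight k = k * (2 * k + 1) := by
    zify
    exact cast_triangularWeight k
  have hneg (k : ℕ) : triangularWeight (-(k + 1)) = (k + 1) * (2 * k + 1) := by
    zify
    rw [cast_triangularWeight]
    ring
  have h := (hasSum_weightSeries (R := R) finite_fiber_triangularWeight).nat_add_neg_add_one
  simpa only [hnat, hneg, gaussSeries] using h.tendsto_sum_nat

lemma tendsto_prod_partProduct_range {u : ℕ → ℕ} (hu : u.Injective) :
    Filter.Tendsto (fun n => ∏ k ∈ Finset.range n, (1 - (X : R⟦X⟧) ^ u k)) Filter.atTop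
      (nhds (partProduct R (Set.range u))) :=
  (hu.hasProd_range_iff (f := fun j => 1 - (X : R⟦X⟧) ^ j)).mp
    (multipliable_partProduct _).hasProd |>.tendsto_prod_nat

lemma gaussSeries_mul_partProduct [IsTopologicalRing R] [T2Space R] :
    gaussSeries R * partProduct R (Set.range fun k => 2 * k + 1) =
      partProduct R (Set.range fun k => 2 * k + 2) := by
  have hodd := tendsto_prod_partProduct_range (R := R) (u := fun k => 2 * k + 1)
    fun a b h => by simpa using h
  have heven := tendsto_prod_partProduct_range (R := R) (u := fun k => 2 * k + 2)
    fun a b h => by simpa using h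
  have herror : Filter.Tendsto (fun n => (∏ k ∈ Finset.range n, (1 - (X : R⟦X⟧) ^ (2 * k + 1))) *
      (∑ k ∈ Finset.range n, (X ^ (k * (2 * k + 1)) + X ^ ((k + 1) * (2 * k + 1)))) -
      ∏ k ∈ Finset.range n, (1 - (X : R⟦X⟧) ^ (2 * k + 2))) Filter.atTop (nhds 0) := by
    refine tendsto_zero_of_X_pow_dvd fun n => ?_
    rw [← sum_prod_one_sub_pow_eq]
    cases n with
    | zero => simp
    | succ n =>
      rw [Finset.sum_range_succ']
      simp only [Nat.Ico_zero_eq_range, Finset.prod_range_zero, zero_mul, pow_zero, mul_one,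
        add_sub_cancel_right]
      exact Finset.dvd_sum fun s _ => Dvd.dvd.mul_left (pow_dvd_pow X (by nlinarith)) _
  have := (hodd.mul tendsto_sum_gaussSeries).sub heven
  rw [mul_comm]
  exact sub_eq_zero.mp (tendsto_nhds_unique this herror)

/-- Euler's product `φ = ∏ (1 - X ^ j)` over the positive integers. -/
noncomputable abbrev eulerProduct (R : Type*) [CommRing R] [TopologicalSpace R] : R⟦X⟧ :=
  partProduct R {j | j ≠ 0}

lemma isUnit_eulerProduct [IsTopologicalRing R] [T2Space R] : IsUnit (eulerProduct R) :=
  IsUnit.of_mul_eq_one_right _ (mk_card_restricted_mul_partProduct fun h => h rfl)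

lemma gaussSeries_eq_eulerProduct_cube : gaussSeries (ZMod 2) = eulerProduct (ZMod 2) ^ 3 := by
  have heven : partProduct (ZMod 2) (Set.range fun k => 2 * k + 2) = eulerProduct (ZMod 2) ^ 2 := by
    have himage : (Set.range fun k => 2 * k + 2) = (2 * ·) '' {j | j ≠ 0} := by
      ext j
      constructor
      · rintro ⟨k, rfl⟩
        exact ⟨k + 1, k.succ_ne_zero, rfl⟩
      · rintro ⟨k, hk, rfl⟩
        exact ⟨k - 1, by grind⟩
    rw [himage, partProduct_image_mul two_ne_zero]
    exact expand_eq_pow 2 1 _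
  have hsplit : eulerProduct (ZMod 2) =
      partProduct (ZMod 2) (Set.range fun k => 2 * k + 1) * eulerProduct (ZMod 2) ^ 2 := by
    have hunion : {j | j ≠ 0} = (Set.range fun k => 2 * k + 1) ∪ Set.range fun k => 2 * k + 2 := by
      ext j
      constructor
      · intro hj
        rcases Nat.even_or_odd' j with ⟨k, rfl | rfl⟩
        · exact .inr ⟨k - 1, by grind⟩
        · exact .inl ⟨k, rfl⟩
      · rintro (⟨k, rfl⟩ | ⟨k, rfl⟩) <;> exact Nat.succ_ne_zero _
    rw [← heven, ← partProduct_union, ← hunion]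
    rw [Set.disjoint_left]
    rintro _ ⟨a, rfl⟩ ⟨b, hb⟩
    grind
  refine mul_right_cancel₀ isUnit_eulerProduct.ne_zero ?_
  linear_combination (exp := 1) gaussSeries (ZMod 2) * hsplit +
    eulerProduct (ZMod 2) ^ 2 * gaussSeries_mul_partProduct (R := ZMod 2) +
    eulerProduct (ZMod 2) ^ 2 * heven

lemma isUnit_gaussSeries : IsUnit (gaussSeries (ZMod 2)) := by
  rw [gaussSeries_eq_eulerProduct_cube]
  exact isUnit_eulerProduct.pow 3

end Gauss

section QuadraticForm

/-- An involution of `ℤ × ℤ` preserving `m (2 m + 1) + 3 n (2 n + 1)`. Completing squares turns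
the form into `x ^ 2 + 3 y ^ 2` with `x = 4 m + 1` and `y = 4 n + 1`, and the involution conjugates
`x + y √-3` and multiplies it by `±(-1 + √-3) / 2`, the sign restoring `x ≡ y ≡ 1 [ZMOD 4]`. -/
def thetaInvolution (x : ℤ × ℤ) : ℤ × ℤ :=
  if 2 ∣ x.1 - x.2 then ((3 * x.2 - x.1) / 2, (x.1 + x.2) / 2)
  else ((x.1 - 3 * x.2 - 1) / 2, -((x.1 + x.2 + 1) / 2))

lemma thetaInvolution_involutive : Function.Involutive thetaInvolution := by
  rintro ⟨m, n⟩
  simp only [thetaInvolution]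
  grind

lemma triangularWeight_thetaInvolution (x : ℤ × ℤ) :
    triangularWeight (thetaInvolution x).1 + 3 * triangularWeight (thetaInvolution x).2 =
      triangularWeight x.1 + 3 * triangularWeight x.2 := by
  obtain ⟨m, n⟩ := x
  zify
  simp only [cast_triangularWeight, thetaInvolution]
  split_ifs with h
  · obtain ⟨k, hk⟩ := h
    obtain rfl : m = n + 2 * k := by lia
    rw [show (3 * n - (n + 2 * k)) / 2 = n - k by lia, show (n + 2 * k + n) / 2 = n + k by lia]
    ring
  · obtain ⟨k, rfl⟩ : ∃ k, m = n + 2 * k + 1 := ⟨(m - n) / 2, by lia⟩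
    rw [show (n + 2 * k + 1 - 3 * n - 1) / 2 = k - n by lia,
      show (n + 2 * k + 1 + n + 1) / 2 = n + k + 1 by lia]
    ring

/-- The fixed points of `thetaInvolution` are the pairs `(n, n)` and the pairs `(-3 n - 1, n)`. -/
def fixedPointsThetaInvolutionEquiv : ℤ ⊕ ℤ ≃ Function.fixedPoints thetaInvolution where
  toFun := Sum.elim
    (fun n => ⟨(n, n), by
      simp only [Function.mem_fixedPoints, Function.IsFixedPt, thetaInvolution]; grind⟩)
    (fun n => ⟨(-3 * n - 1, n), by
      simp only [Function.mem_fixedPoints, Function.IsFixedPt, thetaInvolution]; grind⟩)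
  invFun x := if x.1.1 = x.1.2 then .inl x.1.2 else .inr x.1.2
  left_inv := by
    rintro (n | n)
    · simp
    · exact if_neg (by dsimp; lia)
  right_inv := by
    rintro ⟨⟨m, n⟩, h⟩
    have h : thetaInvolution (m, n) = (m, n) := h
    rw [thetaInvolution] at h
    dsimp only
    split_ifs <;> refine Subtype.ext ?_ <;> dsimp only [Sum.elim_inl, Sum.elim_inr] <;> grind

lemma gaussSeries_mul_expand_three :
    gaussSeries (ZMod 2) * expand 3 three_ne_zero (gaussSeries (ZMod 2)) =
      gaussSeries (ZMod 2) ^ 4 + X * expand 3 three_ne_zero (gaussSeries (ZMod 2)) ^ 4 := by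
  have hfin := finite_fiber_triangularWeight
  have hfin_mul := finite_fiber_comp (mul_right_injective₀ three_ne_zero) hfin
  have hweight : (fun z => triangularWeight (fixedPointsThetaInvolutionEquiv z).1.1 +
      3 * triangularWeight (fixedPointsThetaInvolutionEquiv z).1.2) =
      Sum.elim (fun n => 4 * triangularWeight n) (fun n => 4 * (3 * triangularWeight n) + 1) := by
    ext z
    zify
    rcases z with n | n <;>
      simp [cast_triangularWeight, fixedPointsThetaInvolutionEquiv] <;> ring
  have hfour (f : (ZMod 2)⟦X⟧) : f ^ 4 = expand 4 four_ne_zero f := (expand_eq_pow 2 2 f).symm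
  calc
    gaussSeries (ZMod 2) * expand 3 three_ne_zero (gaussSeries (ZMod 2)) =
        weightSeries (ZMod 2) fun x : ℤ × ℤ => triangularWeight x.1 + 3 * triangularWeight x.2 := by
      rw [weightSeries_prod hfin hfin_mul, weightSeries_const_mul three_ne_zero]
      rfl
    _ = weightSeries (ZMod 2) fun x : Function.fixedPoints thetaInvolution =>
          triangularWeight x.1.1 + 3 * triangularWeight x.1.2 :=
      (weightSeries_fixedPoints thetaInvolution_involutive (finite_fiber_add hfin hfin_mul)
        triangularWeight_thetaInvolution).symm
    _ = weightSeries (ZMod 2) (Sum.elim (fun n => 4 * triangularWeight n)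
          fun n => 4 * (3 * triangularWeight n) + 1) := by
      rw [← hweight, ← weightSeries_comp_equiv fixedPointsThetaInvolutionEquiv]
    _ = gaussSeries (ZMod 2) ^ 4 + X * expand 3 three_ne_zero (gaussSeries (ZMod 2)) ^ 4 := by
      rw [weightSeries_sumElim (finite_fiber_comp (mul_right_injective₀ four_ne_zero) hfin)
          (finite_fiber_comp (f := (4 * · + 1)) (fun a b h => by simpa using h) hfin_mul),
        weightSeries_add_one, weightSeries_const_mul four_ne_zero,
        weightSeries_const_mul four_ne_zero, weightSeries_const_mul three_ne_zero, hfour, hfour]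
      rfl

end QuadraticForm

section EulerProduct

lemma setOf_ne_zero_eq_union {l d : ℕ} (t : ℕ) (hl : l ≠ 0) (hd : d ≠ 0) :
    {j | j ≠ 0} = {j | ¬ l ∣ j ∧ ¬ d * t ∣ j} ∪ (d * ·) '' {j | ¬ l ∣ j ∧ t ∣ j} ∪
      (l * ·) '' {j | j ≠ 0} := by
  ext j
  constructor
  · intro hj
    by_cases hlj : l ∣ j
    · obtain ⟨i, rfl⟩ := hlj
      exact .inr ⟨i, right_ne_zero_of_mul hj, rfl⟩
    · by_cases hdj : d * t ∣ j
      · obtain ⟨i, rfl⟩ := hdj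
        rw [mul_assoc] at hlj ⊢
        exact .inl (.inr ⟨t * i, ⟨fun h => hlj (h.mul_left d), dvd_mul_right t i⟩, rfl⟩)
      · exact .inl (.inl ⟨hlj, hdj⟩)
  · rintro ((⟨hlj, -⟩ | ⟨i, ⟨hli, -⟩, rfl⟩) | ⟨i, hi, rfl⟩)
    · exact fun h => hlj (h ▸ dvd_zero l)
    · exact mul_ne_zero hd fun h => hli (h ▸ dvd_zero l)
    · exact mul_ne_zero hl hi

lemma eulerProduct_eq_mul {R : Type*} [CommRing R] [TopologicalSpace R] [IsTopologicalRing R]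
    [T2Space R] {l d : ℕ} (t : ℕ) (hl : l ≠ 0) (hd : d ≠ 0) (hld : l.Coprime d) :
    eulerProduct R = partProduct R {j | ¬ l ∣ j ∧ ¬ d * t ∣ j} *
      expand d hd (partProduct R {j | ¬ l ∣ j ∧ t ∣ j}) * expand l hl (eulerProduct R) := by
  rw [← partProduct_image_mul hd, ← partProduct_image_mul hl, ← partProduct_union,
    ← partProduct_union, ← setOf_ne_zero_eq_union t hl hd]
  · rw [Set.disjoint_left]
    rintro _ (⟨hlj, -⟩ | ⟨i, ⟨hli, -⟩, rfl⟩) ⟨j, -, hj⟩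
    · exact hlj ⟨j, hj.symm⟩
    · exact hli (hld.dvd_of_dvd_mul_left ⟨j, hj.symm⟩)
  · rw [Set.disjoint_left]
    rintro _ ⟨-, hj⟩ ⟨i, ⟨-, hi⟩, rfl⟩
    exact hj (mul_dvd_mul_left d hi)

lemma regularSeries_mul_eulerProduct {R : Type*} [CommRing R] [TopologicalSpace R]
    [IsTopologicalRing R] [T2Space R] {l d : ℕ} (t : ℕ) (hl : l ≠ 0) (hd : d ≠ 0)
    (hld : l.Coprime d) :
    regularSeries R l (d * t) * eulerProduct R =
      expand d hd (partProduct R {j | ¬ l ∣ j ∧ t ∣ j}) * expand l hl (eulerProduct R) := by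
  calc regularSeries R l (d * t) * eulerProduct R =
        regularSeries R l (d * t) * (partProduct R {j | ¬ l ∣ j ∧ ¬ d * t ∣ j} *
          expand d hd (partProduct R {j | ¬ l ∣ j ∧ t ∣ j}) * expand l hl (eulerProduct R)) :=
      congrArg _ (eulerProduct_eq_mul t hl hd hld)
    _ = _ := by rw [← mul_assoc, ← mul_assoc, regularSeries_mul_partProduct, one_mul]

end EulerProduct

section RegularSeriesModTwo

lemma exists_regularSeries_mul_expand_gaussSeries (t : ℕ) : ∃ c : (ZMod 2)⟦X⟧,
    regularSeries (ZMod 2) 3 (4 * t) * expand 3 three_ne_zero (gaussSeries (ZMod 2)) =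
      c ^ 4 * gaussSeries (ZMod 2) := by
  set φ := eulerProduct (ZMod 2)
  set φ₃ := expand 3 three_ne_zero φ
  set h := partProduct (ZMod 2) {j | ¬ 3 ∣ j ∧ t ∣ j}
  set A := regularSeries (ZMod 2) 3 (4 * t)
  obtain ⟨v, hv⟩ : ∃ v, φ * v = 1 := isUnit_eulerProduct.exists_right_inv
  have hA : A * φ = h ^ 4 * φ₃ := by
    rw [show h ^ 4 = expand 4 four_ne_zero h from (expand_eq_pow 2 2 h).symm]
    exact regularSeries_mul_eulerProduct t three_ne_zero four_ne_zero (by norm_num)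
  refine ⟨h * φ₃ * v, ?_⟩
  rw [gaussSeries_eq_eulerProduct_cube, map_pow]
  calc A * φ₃ ^ 3 = A * φ * v * φ₃ ^ 3 := by rw [mul_assoc A, hv, mul_one]
    _ = h ^ 4 * φ₃ ^ 4 * v * (φ * v) ^ 3 := by
      rw [hA, hv]
      ring
    _ = (h * φ₃ * v) ^ 4 * φ ^ 3 := by ring

lemma coeff_regularSeries_cube_mul_derivative_eq_zero (t : ℕ) {i : ℕ} (hi : 2 ≤ i)
    (hi' : i < 4) (r : ℕ) :
    coeff (4 * (4 * r + i) + 2) (regularSeries (ZMod 2) 3 (4 * t) ^ 3 *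
      d⁄dX (ZMod 2) (regularSeries (ZMod 2) 3 (4 * t))) = 0 := by
  set ψ := gaussSeries (ZMod 2)
  set ψ₃ := expand 3 three_ne_zero ψ
  have htheta : ψ * ψ₃ = ψ ^ 4 + X * ψ₃ ^ 4 := gaussSeries_mul_expand_three
  obtain ⟨c, hc⟩ := exists_regularSeries_mul_expand_gaussSeries t
  obtain ⟨u, hu⟩ : ∃ u, ψ₃ * u = 1 := (isUnit_gaussSeries.map _).exists_right_inv
  have hA : regularSeries (ZMod 2) 3 (4 * t) = (c ^ 2 * u) ^ 2 * (ψ ^ 4 + X * ψ₃ ^ 4) := by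
    calc regularSeries (ZMod 2) 3 (4 * t) = regularSeries (ZMod 2) 3 (4 * t) * ψ₃ * u := by
          rw [mul_assoc, hu, mul_one]
      _ = c ^ 4 * ψ * u * (ψ₃ * u) := by rw [hc, hu, mul_one]
      _ = (c ^ 2 * u) ^ 2 * (ψ * ψ₃) := by ring
      _ = _ := by rw [htheta]
  have hcoeff : (c ^ 2 * u) ^ 2 * ψ * ψ₃ ^ 3 = (c * ψ) ^ 4 + X * (c * ψ₃) ^ 4 := by
    calc (c ^ 2 * u) ^ 2 * ψ * ψ₃ ^ 3 = c ^ 4 * (ψ₃ * u) ^ 2 * (ψ * ψ₃) := by ring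
      _ = (c * ψ) ^ 4 + X * (c * ψ₃) ^ 4 := by
        rw [hu, htheta]
        ring
  rw [coeff_cube_mul_derivative (derivative_pow_char 2 _) hA, hcoeff,
    coeff_pow_four_add_X_mul_pow_four_eq_zero hi hi']

end RegularSeriesModTwo

theorem stmt_6_general (t n : ℕ) :
    coloredRegular 4 3 (4 * t) (16 * n + 15) ≡ 0 [MOD 8] ∧
    coloredRegular 4 3 (4 * t) (16 * n + 11) ≡ 0 [MOD 8] := by
  have hdvd {i : ℕ} (hi : 2 ≤ i) (hi' : i < 4) :
      8 ∣ coloredRegular 4 3 (4 * t) (4 * (4 * n + i) + 2 + 1) := by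
    rw [← coeff_regularSeries_pow]
    refine succ_mul_dvd_coeff_pow_succ (k := 3) (d := 2) _ ?_ ?_
    · exact Nat.Coprime.pow_left 3 (Nat.coprime_two_left.mpr ⟨2 * (4 * n + i) + 1, by ring⟩)
    · rw [map_mul, map_pow, map_derivative, map_regularSeries]
      exact coeff_regularSeries_cube_mul_derivative_eq_zero t hi hi' n
  refine ⟨Nat.modEq_zero_iff_dvd.mpr ?_, Nat.modEq_zero_iff_dvd.mpr ?_⟩
  · rw [show 16 * n + 15 = 4 * (4 * n + 3) + 2 + 1 by ring]
    exact hdvd (by norm_num) (by norm_num)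
  · rw [show 16 * n + 11 = 4 * (4 * n + 2) + 2 + 1 by ring]
    exact hdvd (by norm_num) (by norm_num)

theorem stmt_6 (t : ℕ) (ht : 0 < t) (h3 : ¬ 3 ∣ t) (n : ℕ) :
    coloredRegular 4 3 (4 * t) (16 * n + 15) ≡ 0 [MOD 8] ∧
    coloredRegular 4 3 (4 * t) (16 * n + 11) ≡ 0 [MOD 8] :=
  stmt_6_general t n
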